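/- Let n ≥ 4 be even, let 0 < q < p ≤ 1, let V be a set of n elements partitioned into P₁ and P₂ with |P₁| = |P₂| = n/2, and define weights C_ij = p if i ≠ j lie in the same part, C_ij = q otherwise (C_ii = 0). Set k = 36p/(p − q)². Let T be any binary hierarchical clustering tree on V whose root split (A, B) satisfies |A| = |B| = n/2 and |A ∖ P₁| ≤ k (at most k misclassified vertices per side), with arbitrary binary subtrees on A and B. Then cost_V(T) ≤ c₁·cost_V(T₀), where T₀ is any binary hierarchical clustering tree whose root split is exactly (P₁, P₂) and c₁ = 1 + 144p/(q·n·(p − q)). -/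

import Mathlib

open Finset

/-- A rooted binary hierarchical clustering tree with leaves labelled by `α`. -/
inductive HTree (α : Type*) where
  | leaf : α → HTree α
  | node : HTree α → HTree α → HTree α

namespace HTree

variable {α : Type*} [DecidableEq α]

/-- The set of leaf labels of a tree. -/
def leaves : HTree α → Finset α
  | .leaf a => {a}
  | .node l r => leaves l ∪ leaves r

/-- All leaf labels of the tree are pairwise distinct, i.e. the leaves of the two
subtrees of every internal node are disjoint. -/
def distinctLeaves : HTree α → Prop
  | .leaf _ => True
  | .node l r => distinctLeaves l ∧ distinctLeaves r ∧ Disjoint (leaves l) (leaves r)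

/-- `T` is a hierarchical clustering tree on the whole vertex set `V` (= all of `α`):
its leaves are pairwise distinct and are exactly the elements of `V`. -/
def IsTreeOn [Fintype α] (T : HTree α) : Prop :=
  distinctLeaves T ∧ leaves T = Finset.univ

/-- Dasgupta's hierarchical clustering cost
`cost_V(T) = Σ_{unordered pairs {i,j}, i ≠ j} C_ij·|leaves(T[i ∨ j])|`,
written equivalently in recursive form: each internal node `t` splitting into children
with leaf sets `A`, `B` contributes `|leaves(t)| · Σ_{i ∈ A, j ∈ B} C_ij`
(each unordered cross pair `{i,j}` has `t` as its lowest common ancestor and is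
counted exactly once since `A` and `B` are disjoint). -/
noncomputable def cost (C : α → α → ℝ) : HTree α → ℝ
  | .leaf _ => 0
  | .node l r =>
      ((leaves l ∪ leaves r).card : ℝ) * (∑ i ∈ leaves l, ∑ j ∈ leaves r, C i j)
        + cost C l + cost C r

end HTree

/-!
Inside `A` and `B` every weight is at most `p`, while `P₁` and `P₂` are cliques of weight `p` and of
the same size; all binary trees on a clique have the same cost, so the subtrees of `T` cost no more
than those of `T₀`. Hence `T` can lose only at the root. If `a` vertices of `A` lie outside `P₁`,
then `a` vertices of `B` lie in `P₁`, and at most `2a · n/2` pairs cut by `(A, B)` have weight `p`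
instead of `q`; this adds at most `a (p - q) n²` to the cost. Relative to the root cost
`q n³ / 4` of `T₀` the excess is `4 a (p - q) / (q n)`.
-/

/-- The total weight of the pairs separated by a split `(A, B)`: a node with children
`A` and `B` contributes this weight times its number of leaves to the clustering cost. -/
noncomputable def cutWeight {α : Type*} (C : α → α → ℝ) (A B : Finset α) : ℝ :=
  ∑ i ∈ A, ∑ j ∈ B, C i j

/-- The planted partition weights: `p` inside a part, `q` across the parts, and `0` on the
diagonal. The second part is implicit, as the complement of the finset `P`. -/
noncomputable def plantedWeight {α : Type*} [DecidableEq α] (P : Finset α) (p q : ℝ)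
    (i j : α) : ℝ :=
  if i = j then 0 else if (i ∈ P ↔ j ∈ P) then p else q

section Weights

variable {α : Type*}

theorem cutWeight_nonneg {C : α → α → ℝ} (hC : ∀ i j, 0 ≤ C i j) (A B : Finset α) :
    0 ≤ cutWeight C A B :=
  sum_nonneg fun i _ => sum_nonneg fun j _ => hC i j

theorem cutWeight_const (p : ℝ) (A B : Finset α) :
    cutWeight (fun _ _ => p) A B = p * #A * #B := by
  simp only [cutWeight, sum_const, nsmul_eq_mul]
  ring

variable [DecidableEq α] {P A B : Finset α} {p q : ℝ} {i j : α}

theorem cutWeight_mono {C D : α → α → ℝ} (hAB : Disjoint A B)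
    (hCD : ((A ∪ B : Finset α) : Set α).Pairwise fun i j => C i j ≤ D i j) :
    cutWeight C A B ≤ cutWeight D A B :=
  sum_le_sum fun _ hi => sum_le_sum fun _ hj =>
    hCD (mem_union_left B hi) (mem_union_right A hj) (disjoint_iff_ne.mp hAB _ hi _ hj)

theorem plantedWeight_nonneg (hq : 0 ≤ q) (hqp : q ≤ p) (i j : α) :
    0 ≤ plantedWeight P p q i j := by
  unfold plantedWeight
  split_ifs <;> linarith

theorem plantedWeight_le (hqp : q ≤ p) (hij : i ≠ j) : plantedWeight P p q i j ≤ p := by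
  unfold plantedWeight
  split_ifs <;> trivial

theorem plantedWeight_of_mem_iff (hij : i ≠ j) (hP : i ∈ P ↔ j ∈ P) :
    plantedWeight P p q i j = p := by
  rw [plantedWeight, if_neg hij, if_pos hP]

theorem plantedWeight_eq_add_indicator (hij : i ≠ j) :
    plantedWeight P p q i j =
      q + (p - q) * ((if i ∈ P then 1 else 0) * (if j ∈ P then 1 else 0) +
        (if i ∉ P then 1 else 0) * (if j ∉ P then 1 else 0)) := by
  by_cases hi : i ∈ P <;> by_cases hj : j ∈ P <;> simp [plantedWeight, hij, hi, hj]

theorem cutWeight_plantedWeight (hAB : Disjoint A B) :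
    cutWeight (plantedWeight P p q) A B =
      q * #A * #B + (p - q) * (#(A ∩ P) * #(B ∩ P) + #(A \ P) * #(B \ P)) := by
  have indicator_form : cutWeight (plantedWeight P p q) A B = ∑ i ∈ A, ∑ j ∈ B,
      (q + (p - q) * ((if i ∈ P then 1 else 0) * (if j ∈ P then 1 else 0) +
        (if i ∉ P then 1 else 0) * (if j ∉ P then 1 else 0))) :=
    sum_congr rfl fun _ hi => sum_congr rfl fun _ hj =>
      plantedWeight_eq_add_indicator (disjoint_iff_ne.mp hAB _ hi _ hj)
  simp only [indicator_form, sum_add_distrib, ← mul_sum, ← sum_mul, sum_const, nsmul_eq_mul,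
    sum_boole, filter_mem_eq_inter, filter_notMem_eq_sdiff]
  ring

theorem cutWeight_plantedWeight_le (hqp : q ≤ p) (hAB : Disjoint A B) :
    cutWeight (plantedWeight P p q) A B ≤
      q * #A * #B + (p - q) * (#A * #(B ∩ P) + #(A \ P) * #B) := by
  have := sub_nonneg.mpr hqp
  rw [cutWeight_plantedWeight hAB]
  gcongr
  · exact inter_subset_left
  · exact sdiff_subset

theorem cutWeight_plantedWeight_compl [Fintype α] :
    cutWeight (plantedWeight P p q) P Pᶜ = q * #P * #Pᶜ := by
  have disjoint_parts : Disjoint P Pᶜ := disjoint_compl_right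
  simp [cutWeight_plantedWeight disjoint_parts, inter_comm Pᶜ P]

theorem card_compl_eq_card_of_two_mul_card_eq [Fintype α] (hA : 2 * #A = Fintype.card α) :
    #Aᶜ = #A := by
  rw [card_compl]
  omega

theorem card_compl_inter_eq_card_sdiff [Fintype α] (hAP : #A = #P) : #(Aᶜ ∩ P) = #(A \ P) := by
  rw [inter_comm, ← sdiff_eq_inter_compl, card_sdiff_comm hAP]

end Weights

namespace HTree

section Cost

variable {α : Type*} [DecidableEq α] {C D : α → α → ℝ} {T l r : HTree α} {p : ℝ}

theorem cost_node (hlr : Disjoint l.leaves r.leaves) :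
    cost C (node l r) =
      (#l.leaves + #r.leaves) * cutWeight C l.leaves r.leaves + cost C l + cost C r := by
  rw [cost, card_union_of_disjoint hlr, Nat.cast_add, cutWeight]

theorem cost_nonneg (hC : ∀ i j, 0 ≤ C i j) (T : HTree α) : 0 ≤ cost C T := by
  induction T with
  | leaf _ => rfl
  | node l r ihl ihr =>
    have := cutWeight_nonneg hC l.leaves r.leaves
    rw [cost, ← cutWeight]
    positivity

theorem cost_mono (hT : T.distinctLeaves)
    (hCD : (T.leaves : Set α).Pairwise fun i j => C i j ≤ D i j) : cost C T ≤ cost D T := by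
  induction T with
  | leaf _ => rfl
  | node l r ihl ihr =>
    obtain ⟨hl, hr, hlr⟩ := hT
    have left_le := ihl hl (hCD.mono (coe_subset.mpr subset_union_left))
    have right_le := ihr hr (hCD.mono (coe_subset.mpr subset_union_right))
    have cut_le := cutWeight_mono hlr hCD
    rw [cost_node hlr, cost_node hlr]
    gcongr

theorem cost_const (p : ℝ) (hT : T.distinctLeaves) :
    cost (fun _ _ => p) T = p * ((#T.leaves : ℝ) ^ 3 - #T.leaves) / 3 := by
  induction T with
  | leaf _ => simp [cost, leaves]
  | node l r ihl ihr =>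
    obtain ⟨hl, hr, hlr⟩ := hT
    rw [cost_node hlr, cutWeight_const, ihl hl, ihr hr, leaves, card_union_of_disjoint hlr]
    push_cast
    ring

theorem cost_le_cost_of_clique {T₀ : HTree α} (hT : T.distinctLeaves) (hT₀ : T₀.distinctLeaves)
    (hcard : #T.leaves = #T₀.leaves) (hle : (T.leaves : Set α).Pairwise fun i j => C i j ≤ p)
    (hge : (T₀.leaves : Set α).Pairwise fun i j => p ≤ C i j) :
    cost C T ≤ cost C T₀ :=
  calc
    cost C T ≤ cost (fun _ _ => p) T := cost_mono hT hle
    _ = cost (fun _ _ => p) T₀ := by rw [cost_const p hT, cost_const p hT₀, hcard]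
    _ ≤ cost C T₀ := cost_mono hT₀ hge

theorem IsTreeOn.leaves_right [Fintype α] (hT : (node l r).IsTreeOn) :
    r.leaves = l.leavesᶜ :=
  (IsCompl.of_eq hT.1.2.2.eq_bot hT.2).compl_eq.symm

end Cost

section PlantedPartition

variable {α : Type*} [DecidableEq α] {P : Finset α} {p q : ℝ}

theorem cost_plantedWeight_le_of_homogeneous {T T₀ : HTree α} (hqp : q ≤ p)
    (hT : T.distinctLeaves) (hT₀ : T₀.distinctLeaves) (hcard : #T.leaves = #T₀.leaves)
    (hhom : ∀ i ∈ T₀.leaves, ∀ j ∈ T₀.leaves, (i ∈ P ↔ j ∈ P)) :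
    cost (plantedWeight P p q) T ≤ cost (plantedWeight P p q) T₀ :=
  cost_le_cost_of_clique hT hT₀ hcard (fun _ _ _ _ hij => plantedWeight_le hqp hij)
    fun i hi j hj hij => (plantedWeight_of_mem_iff hij (hhom i hi j hj)).ge

variable [Fintype α] {l r l₀ r₀ : HTree α}

theorem card_cube_le_cost_planted_split (hP : 2 * #P = Fintype.card α) (hq : 0 ≤ q) (hqp : q ≤ p)
    (hT₀ : (node l₀ r₀).IsTreeOn) (hl₀ : l₀.leaves = P) :
    q * (Fintype.card α : ℝ) ^ 3 / 4 ≤ cost (plantedWeight P p q) (node l₀ r₀) := by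
  have weight_nonneg := plantedWeight_nonneg (P := P) hq hqp
  have cost_left := cost_nonneg weight_nonneg l₀
  have cost_right := cost_nonneg weight_nonneg r₀
  have card_compl_part := card_compl_eq_card_of_two_mul_card_eq hP
  rw [cost_node hT₀.1.2.2, hT₀.leaves_right, hl₀, cutWeight_plantedWeight_compl,
    card_compl_part, ← hP]
  push_cast
  linarith

theorem cost_planted_balanced_le_add (hP : 2 * #P = Fintype.card α) (hqp : q ≤ p)
    (hT : (node l r).IsTreeOn) (hl : 2 * #l.leaves = Fintype.card α)
    (hT₀ : (node l₀ r₀).IsTreeOn) (hl₀ : l₀.leaves = P) :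
    cost (plantedWeight P p q) (node l r) ≤
      cost (plantedWeight P p q) (node l₀ r₀) +
        #(l.leaves \ P) * (p - q) * (Fintype.card α : ℝ) ^ 2 := by
  have hr := hT.leaves_right
  have hr₀ : r₀.leaves = Pᶜ := hl₀ ▸ hT₀.leaves_right
  have card_left : #l.leaves = #P := by omega
  have card_right : #l.leavesᶜ = #P :=
    (card_compl_eq_card_of_two_mul_card_eq hl).trans card_left
  have card_compl_part := card_compl_eq_card_of_two_mul_card_eq hP
  have cost_left : cost (plantedWeight P p q) l ≤ cost (plantedWeight P p q) l₀ :=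
    cost_plantedWeight_le_of_homogeneous hqp hT.1.1 hT₀.1.1 (by rw [card_left, hl₀])
      fun i hi j hj => iff_of_true (hl₀ ▸ hi) (hl₀ ▸ hj)
  have cost_right : cost (plantedWeight P p q) r ≤ cost (plantedWeight P p q) r₀ :=
    cost_plantedWeight_le_of_homogeneous hqp hT.1.2.1 hT₀.1.2.1
      (by rw [hr, card_right, hr₀, card_compl_part])
      fun i hi j hj => iff_of_false (mem_compl.mp (hr₀ ▸ hi)) (mem_compl.mp (hr₀ ▸ hj))
  have cut_le := cutWeight_plantedWeight_le (P := P) hqp (disjoint_compl_right (a := l.leaves))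
  rw [card_compl_inter_eq_card_sdiff card_left, card_left, card_right] at cut_le
  rw [cost_node hT.1.2.2, cost_node hT₀.1.2.2, hr, hr₀, hl₀, cutWeight_plantedWeight_compl,
    card_left, card_right, card_compl_part, ← hP]
  push_cast
  linarith [mul_le_mul_of_nonneg_left cut_le (by positivity : (0 : ℝ) ≤ #P + #P)]

end PlantedPartition

end HTree

open HTree in
theorem planted_partition_spectral_cost_general {α : Type*} [Fintype α] [DecidableEq α]
    {P : Finset α} (hP : 2 * #P = Fintype.card α) {p q k : ℝ} (hq : 0 < q) (hqp : q ≤ p)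
    {l r : HTree α} (hT : (node l r).IsTreeOn) (hl : 2 * #l.leaves = Fintype.card α)
    (hk : #(l.leaves \ P) ≤ k)
    {l₀ r₀ : HTree α} (hT₀ : (node l₀ r₀).IsTreeOn) (hl₀ : l₀.leaves = P) :
    cost (plantedWeight P p q) (node l r) ≤
      (1 + 4 * k * (p - q) / (q * Fintype.card α)) *
        cost (plantedWeight P p q) (node l₀ r₀) := by
  set n := (Fintype.card α : ℝ)
  set cost₀ := cost (plantedWeight P p q) (node l₀ r₀)
  have := sub_nonneg.mpr hqp
  have hk₀ : 0 ≤ k := (Nat.cast_nonneg _).trans hk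
  calc
    cost (plantedWeight P p q) (node l r)
      ≤ cost₀ + #(l.leaves \ P) * (p - q) * n ^ 2 :=
        cost_planted_balanced_le_add hP hqp hT hl hT₀ hl₀
    _ ≤ cost₀ + k * (p - q) * n ^ 2 := by gcongr
    _ = cost₀ + 4 * k * (p - q) / (q * n) * (q * n ^ 3 / 4) := by field_simp
    _ ≤ cost₀ + 4 * k * (p - q) / (q * n) * cost₀ := by
        gcongr
        exact card_cube_le_cost_planted_split hP hq.le hqp hT₀ hl₀
    _ = (1 + 4 * k * (p - q) / (q * n)) * cost₀ := by ring

/-- in the `(n,p,q)`-planted partition weights with `0 < q < p ≤ 1` and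
`k = 36p/(p−q)²`, any binary tree `T` whose root split `(A,B)` is balanced
(`|A| = |B| = n/2`) and misclassifies at most `k` vertices per side (`|A ∖ P₁| ≤ k`), with
arbitrary binary subtrees, has `cost(T) ≤ c₁·cost(T₀)` for any binary tree `T₀` whose root
split is exactly `(P₁, P₂)`, where `c₁ = 1 + 144p/(q·n·(p−q))`. -/
theorem planted_partition_spectral_cost {α : Type*} [Fintype α] [DecidableEq α]
    (n : ℕ) (hn : 4 ≤ n) (hcard : Fintype.card α = n)
    (P₁ : Finset α) (hP₁ : 2 * P₁.card = n)
    (p q : ℝ) (hq0 : 0 < q) (hqp : q < p) (hp1 : p ≤ 1)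
    (C : α → α → ℝ)
    (hC : ∀ i j, C i j = if i = j then 0 else if (i ∈ P₁ ↔ j ∈ P₁) then p else q)
    -- the tree `T = node TA TB`, with root split `(A, B)`
    (TA TB : HTree α) (hT : (HTree.node TA TB).IsTreeOn)
    (hbal : 2 * TA.leaves.card = n)
    (hmis : ((TA.leaves \ P₁).card : ℝ) ≤ 36 * p / (p - q)^2)
    -- the tree `T₀ = node TL TR`, with root split exactly `(P₁, P₂)`
    (TL TR : HTree α) (hT₀ : (HTree.node TL TR).IsTreeOn)
    (hTL : TL.leaves = P₁) (hTR : TR.leaves = P₁ᶜ) :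
    HTree.cost C (HTree.node TA TB)
      ≤ (1 + 144 * p / (q * (n : ℝ) * (p - q))) * HTree.cost C (HTree.node TL TR) := by
  obtain rfl : C = plantedWeight P₁ p q := funext₂ hC
  subst hcard
  convert planted_partition_spectral_cost_general hP₁ hq0 hqp.le hT hbal hmis hT₀ hTL using 3
  have : p - q ≠ 0 := (sub_pos.mpr hqp).ne'
  field_simp
  ring
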